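/- Let W be a convex subset of a real vector space, let R_1,…,R_m : W → ℝ be convex bounded functions, and define φ(w,q) = Σ_{i=1}^m q_i R_i(w) for q ∈ Δ_m. For any sequences w_1,…,w_T ∈ W and q_1,…,q_T ∈ Δ_m, let w̄ = (1/T)Σ_{t=1}^T w_t and q̄ = (1/T)Σ_{t=1}^T q_t. Then ε_φ(w̄, q̄) ≤ (1/T)·(sup_{q∈Δ_m} Σ_{t=1}^T φ(w_t, q) − inf_{w∈W} Σ_{t=1}^T φ(w, q_t)), where ε_φ(w̄, q̄) = sup_{q∈Δ_m} φ(w̄,q) − inf_{w∈W} φ(w, q̄). -/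

import Mathlib

/-! Both halves of the gap are bounded separately. By Jensen's inequality applied to each `Rᵢ`,
`φ(w̄, p) ≤ (1/T) Σₜ φ(wₜ, p)` for every `p` in the simplex, and by linearity of `φ` in its second
argument `φ(u, q̄) = (1/T) Σₜ φ(u, qₜ)`. Taking the supremum over `p` and the infimum over `u` gives
the claim. Boundedness of the risks ensures that the regret sums are bounded above in `p` and
below in `u`, so that the real-valued `⨆` and `⨅` are a genuine supremum and infimum. -/

open scoped BigOperators

/-- A convex combination of numbers of absolute value at most `C` has absolute value at
most `C`. -/
lemma abs_sum_mul_le_of_mem_stdSimplex {m : ℕ} {p r : Fin m → ℝ} {C : ℝ}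
    (hp : p ∈ stdSimplex ℝ (Fin m)) (hr : ∀ i, |r i| ≤ C) : |∑ i, p i * r i| ≤ C :=
  calc |∑ i, p i * r i| ≤ ∑ i, |p i * r i| := Finset.abs_sum_le_sum_abs _ _
    _ ≤ ∑ i, p i * C := Finset.sum_le_sum fun i _ => by
        rw [abs_mul, abs_of_nonneg (hp.1 i)]
        exact mul_le_mul_of_nonneg_left (hr i) (hp.1 i)
    _ = C := by rw [← Finset.sum_mul, hp.2, one_mul]

/-- For convex bounded risks and `φ(w,q) = Σᵢ qᵢ Rᵢ(w)`, the averaged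
iterates `w̄ = (1/T) Σₜ wₜ`, `q̄ = (1/T) Σₜ qₜ` satisfy
`ε_φ(w̄,q̄) ≤ (1/T)(sup_{q∈Δ_m} Σₜ φ(wₜ,q) − inf_{w∈W} Σₜ φ(w,qₜ))`. -/
theorem stmt12 {E : Type*} [AddCommGroup E] [Module ℝ E]
    (W : Set E) (hWconv : Convex ℝ W) (hWne : W.Nonempty)
    (m T : ℕ) (hm : 1 ≤ m) (hT : 1 ≤ T)
    (R : Fin m → E → ℝ)
    (hRconv : ∀ i, ConvexOn ℝ W (R i))
    (C : ℝ) (hRbdd : ∀ i, ∀ w ∈ W, |R i w| ≤ C)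
    (φ : E → (Fin m → ℝ) → ℝ)
    (hφ : ∀ w q, φ w q = ∑ i, q i * R i w)
    (εφ : E → (Fin m → ℝ) → ℝ)
    (hεφ : ∀ wb qb, εφ wb qb =
      (⨆ q : stdSimplex ℝ (Fin m), φ wb (q : Fin m → ℝ)) - ⨅ w : W, φ (w : E) qb)
    (w : ℕ → E) (hw : ∀ t ∈ Finset.Icc 1 T, w t ∈ W)
    (q : ℕ → Fin m → ℝ) (hq : ∀ t ∈ Finset.Icc 1 T, q t ∈ stdSimplex ℝ (Fin m))
    (wbar : E) (hwbar : wbar = (T : ℝ)⁻¹ • ∑ t ∈ Finset.Icc 1 T, w t)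
    (qbar : Fin m → ℝ) (hqbar : qbar = fun i => (T : ℝ)⁻¹ * ∑ t ∈ Finset.Icc 1 T, q t i) :
    εφ wbar qbar ≤ (T : ℝ)⁻¹ *
      ((⨆ p : stdSimplex ℝ (Fin m), ∑ t ∈ Finset.Icc 1 T, φ (w t) (p : Fin m → ℝ)) -
        ⨅ u : W, ∑ t ∈ Finset.Icc 1 T, φ (u : E) (q t)) := by
  have hT0 : (0 : ℝ) < T := by exact_mod_cast hT
  have hTi : (0 : ℝ) ≤ (T : ℝ)⁻¹ := inv_nonneg.2 hT0.le
  have : Nonempty W := hWne.to_subtype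
  have : Nonempty (stdSimplex ℝ (Fin m)) := ⟨⟨_, single_mem_stdSimplex ℝ (⟨0, hm⟩ : Fin m)⟩⟩
  have hφC : ∀ u ∈ W, ∀ p ∈ stdSimplex ℝ (Fin m), |φ u p| ≤ C := fun u hu p hp => by
    rw [hφ]
    exact abs_sum_mul_le_of_mem_stdSimplex hp fun i => hRbdd i u hu
  have hjensen : ∀ p ∈ stdSimplex ℝ (Fin m),
      φ wbar p ≤ (T : ℝ)⁻¹ * ∑ t ∈ Finset.Icc 1 T, φ (w t) p := by
    intro p hp
    simp only [hφ]
    rw [Finset.sum_comm, Finset.mul_sum]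
    refine Finset.sum_le_sum fun i _ => ?_
    have h := (hRconv i).map_sum_le (t := Finset.Icc 1 T) (w := fun _ => (T : ℝ)⁻¹) (p := w)
      (fun _ _ => hTi) (by simp [hT0.ne']) hw
    rw [← Finset.smul_sum, ← Finset.smul_sum, ← hwbar, smul_eq_mul] at h
    calc p i * R i wbar ≤ p i * ((T : ℝ)⁻¹ * ∑ t ∈ Finset.Icc 1 T, R i (w t)) :=
          mul_le_mul_of_nonneg_left h (hp.1 i)
      _ = (T : ℝ)⁻¹ * ∑ t ∈ Finset.Icc 1 T, p i * R i (w t) := by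
          rw [← Finset.mul_sum]; ring
  have hlin : ∀ u, φ u qbar = (T : ℝ)⁻¹ * ∑ t ∈ Finset.Icc 1 T, φ u (q t) := by
    intro u
    simp only [hφ, hqbar]
    rw [Finset.sum_comm, Finset.mul_sum]
    refine Finset.sum_congr rfl fun i _ => ?_
    rw [mul_assoc, Finset.sum_mul]
  have hbddA : BddAbove (Set.range fun p : stdSimplex ℝ (Fin m) =>
      ∑ t ∈ Finset.Icc 1 T, φ (w t) (p : Fin m → ℝ)) := by
    refine ⟨∑ t ∈ Finset.Icc 1 T, C, ?_⟩
    rintro _ ⟨p, rfl⟩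
    exact Finset.sum_le_sum fun t ht => (abs_le.1 (hφC _ (hw t ht) _ p.2)).2
  have hbddB : BddBelow (Set.range fun u : W => ∑ t ∈ Finset.Icc 1 T, φ (u : E) (q t)) := by
    refine ⟨∑ t ∈ Finset.Icc 1 T, -C, ?_⟩
    rintro _ ⟨u, rfl⟩
    exact Finset.sum_le_sum fun t ht => (abs_le.1 (hφC _ u.2 _ (hq t ht))).1
  rw [hεφ, mul_sub]
  refine sub_le_sub (ciSup_le fun p => ?_) (le_ciInf fun u => ?_)
  · exact (hjensen p p.2).trans (mul_le_mul_of_nonneg_left (le_ciSup hbddA p) hTi)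
  · rw [hlin]
    exact mul_le_mul_of_nonneg_left (ciInf_le hbddB u) hTi
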